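/- arXiv:1712.01490 — 7 statements merged into one kernel-verified Lean document; each statement's English description precedes it below -/
import Mathlib

section
/- Let K be an infinite field and n > 3. Let Φ be a group automorphism of TAut₀(K⟨x₁,…,xₙ⟩) that fixes every diagonal automorphism xᵢ ↦ λᵢxᵢ (λᵢ ∈ K^×). Then Φ maps the set of origin-preserving elementary automorphisms of K⟨x₁,…,xₙ⟩ bijectively onto itself. -/
namespace Stmt6

variable (K : Type*) [Field K] (n : ℕ)

/-- The augmentation homomorphism of the free associative algebra, sending every
generator to `0`. Its kernel is the augmentation ideal. -/
noncomputable def aug : FreeAlgebra K (Fin n) →ₐ[K] K :=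
  FreeAlgebra.lift K (fun _ : Fin n => (0 : K))

/-- An automorphism is origin-preserving if it maps the augmentation ideal
(the kernel of the augmentation) into itself. -/
def OriginPres (φ : FreeAlgebra K (Fin n) ≃ₐ[K] FreeAlgebra K (Fin n)) : Prop :=
  ∀ p : FreeAlgebra K (Fin n), aug K n p = 0 → aug K n (φ p) = 0

/-- Linear automorphisms: each generator is sent to a linear form. -/
def IsLinearAut (φ : FreeAlgebra K (Fin n) ≃ₐ[K] FreeAlgebra K (Fin n)) : Prop :=
  ∃ a : Fin n → Fin n → K, ∀ i, φ (FreeAlgebra.ι K i) = ∑ j, a i j • FreeAlgebra.ι K j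

/-- Diagonal automorphisms: `xᵢ ↦ λᵢ xᵢ` with all `λᵢ ∈ K^×`. -/
def IsDiagonal (φ : FreeAlgebra K (Fin n) ≃ₐ[K] FreeAlgebra K (Fin n)) : Prop :=
  ∃ l : Fin n → K, (∀ i, l i ≠ 0) ∧ ∀ i, φ (FreeAlgebra.ι K i) = l i • FreeAlgebra.ι K i

/-- Elementary automorphisms: `xᵢ ↦ xᵢ + P`, `xⱼ ↦ xⱼ` for `j ≠ i`, where `P` does not
involve `xᵢ`. -/
def IsElementary (φ : FreeAlgebra K (Fin n) ≃ₐ[K] FreeAlgebra K (Fin n)) : Prop :=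
  ∃ i : Fin n, (∀ j, j ≠ i → φ (FreeAlgebra.ι K j) = FreeAlgebra.ι K j) ∧
    ∃ P ∈ Algebra.adjoin K (FreeAlgebra.ι K '' ({i}ᶜ : Set (Fin n))),
      φ (FreeAlgebra.ι K i) = FreeAlgebra.ι K i + P

/-- The tame automorphism group: generated by linear and elementary automorphisms. -/
noncomputable def TAut : Subgroup (FreeAlgebra K (Fin n) ≃ₐ[K] FreeAlgebra K (Fin n)) :=
  Subgroup.closure {φ | IsLinearAut K n φ ∨ IsElementary K n φ}

/-- The set of origin-preserving tame automorphisms. -/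
def TAut0 : Set (FreeAlgebra K (Fin n) ≃ₐ[K] FreeAlgebra K (Fin n)) :=
  {φ | φ ∈ TAut K n ∧ OriginPres K n φ}

/-- Pole comparison lemma. -/
theorem pole_lemma {K V : Type*} [Field K] [Infinite K] [AddCommGroup V] [Module K V]
    (f g : ℕ → V) (N ε : ℕ) (hN : ε < N)
    (h : ∀ s : K, s ≠ 0 → s + 1 ≠ 0 →
      ∑ k ∈ Finset.range (N + 1), ((s + 1) ^ ε * (s + 1)⁻¹ ^ k) • f k =
      ∑ k ∈ Finset.range (N + 1), (s ^ ε * s⁻¹ ^ k) • g k) : f N = 0 := by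
  refine (Module.forall_dual_apply_eq_zero_iff K (f N)).1 fun l => ?_
  let p : Polynomial K := ∑ k ∈ Finset.range (N + 1),
    Polynomial.X ^ N * (Polynomial.X + 1) ^ (N - k) * Polynomial.C (l (f k))
  let q : Polynomial K := ∑ k ∈ Finset.range (N + 1),
    Polynomial.X ^ ε * (Polynomial.X + 1) ^ (N - ε) * Polynomial.X ^ (N - k) *
      Polynomial.C (l (g k))
  have hpq : p = q := by
    apply Polynomial.eq_of_infinite_eval_eq
    have hfin : ({0, -1} : Set K).Finite := by simp
    refine hfin.infinite_compl.mono ?_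
    intro s hs
    simp only [Set.mem_compl_iff, Set.mem_insert_iff, Set.mem_singleton_iff, not_or] at hs
    have hs1 : s + 1 ≠ 0 := fun h0 => hs.2 (eq_neg_of_add_eq_zero_left h0)
    have h1 := congrArg l (h s hs.1 hs1)
    simp only [map_sum, map_smul, smul_eq_mul] at h1
    have h2 := congrArg (fun z => s ^ N * (s + 1) ^ (N - ε) * z) h1
    simp only [Finset.mul_sum] at h2
    simp only [Set.mem_ofPred_eq, p, q, Polynomial.eval_finsetSum, Polynomial.eval_mul,
      Polynomial.eval_pow, Polynomial.eval_X, Polynomial.eval_add, Polynomial.eval_one,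
      Polynomial.eval_C]
    convert h2 using 1
    · refine Finset.sum_congr rfl fun k hk => ?_
      have hk' : k ≤ N := Nat.lt_succ_iff.1 (Finset.mem_range.1 hk)
      have : (s + 1) ^ (N - ε) * (s + 1) ^ ε = (s + 1) ^ (N - k) * (s + 1) ^ k := by
        rw [← pow_add, ← pow_add]; congr 1; omega
      have e2 : (s + 1) ^ k * (s + 1)⁻¹ ^ k = 1 := by
        rw [← mul_pow, mul_inv_cancel₀ hs1, one_pow]
      linear_combination (-s ^ N * (s + 1)⁻¹ ^ k * l (f k)) * this -
        s ^ N * (s + 1) ^ (N - k) * l (f k) * e2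
    · refine Finset.sum_congr rfl fun k hk => ?_
      have hk' : k ≤ N := Nat.lt_succ_iff.1 (Finset.mem_range.1 hk)
      have : s ^ N = s ^ (N - k) * s ^ k := by
        rw [← pow_add]; congr 1; omega
      have e2 : s ^ k * s⁻¹ ^ k = 1 := by
        rw [← mul_pow, mul_inv_cancel₀ hs.1, one_pow]
      rw [this]
      linear_combination (-(s + 1) ^ (N - ε) * s ^ (N - k) * s ^ ε * l (g k)) * e2
  have h3 := congrArg (Polynomial.eval (-1)) hpq
  simp only [p, q, Polynomial.eval_finsetSum, Polynomial.eval_mul,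
      Polynomial.eval_pow, Polynomial.eval_X, Polynomial.eval_add, Polynomial.eval_one,
      Polynomial.eval_C, neg_add_cancel] at h3
  rw [Finset.sum_range_succ, Finset.sum_eq_zero, Finset.sum_eq_zero] at h3
  · simpa using h3
  · intro k _
    rw [zero_pow (by omega)]; simp
  · intro k hk
    have := Finset.mem_range.1 hk
    rw [zero_pow (by omega)]; simp

/-- Scaling of the `i`-th variable. -/
noncomputable def tau (i : Fin n) (s : K) : FreeAlgebra K (Fin n) →ₐ[K] FreeAlgebra K (Fin n) :=
  FreeAlgebra.lift K (fun j => (if j = i then s else 1) • FreeAlgebra.ι K j)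

theorem tau_i (i : Fin n) (s : K) : tau K n i s (FreeAlgebra.ι K i) = s • FreeAlgebra.ι K i := by
  simp [tau]

theorem tau_j (i : Fin n) (s : K) (j : Fin n) (h : j ≠ i) :
    tau K n i s (FreeAlgebra.ι K j) = FreeAlgebra.ι K j := by
  simp [tau, h]

theorem tau_comp (i : Fin n) (s t : K) (h : s * t = 1) :
    (tau K n i s).comp (tau K n i t) = AlgHom.id K _ := by
  ext j
  by_cases hj : j = i
  · subst hj; simp [tau_i, smul_smul, mul_comm t s, h]
  · simp [tau_j K n i _ j hj]

/-- The diagonal automorphism scaling the `i`-th variable. -/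
noncomputable def tt (i : Fin n) (s : Kˣ) : FreeAlgebra K (Fin n) ≃ₐ[K] FreeAlgebra K (Fin n) :=
  AlgEquiv.ofAlgHom (tau K n i s) (tau K n i (s⁻¹ : Kˣ))
    (tau_comp K n i _ _ (by simp)) (tau_comp K n i _ _ (by simp))

theorem tt_apply (i : Fin n) (s : Kˣ) (p) : tt K n i s p = tau K n i s p := rfl

theorem tt_diag (i : Fin n) (s : Kˣ) : IsDiagonal K n (tt K n i s) := by
  refine ⟨fun j => if j = i then s else 1, fun j => ?_, fun j => ?_⟩
  · dsimp only; split_ifs <;> simp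
  · simp [tt_apply, tau]

theorem tau_aug (i : Fin n) (s : K) (p) : aug K n (tau K n i s p) = aug K n p := by
  have : (aug K n).comp (tau K n i s) = aug K n := by
    ext j; simp [tau, aug]; split_ifs <;> simp
  exact DFunLike.congr_fun this p

theorem tt_mem (i : Fin n) (s : Kˣ) : tt K n i s ∈ TAut0 K n := by
  refine ⟨Subgroup.subset_closure (Or.inl ?_), fun p hp => ?_⟩
  · obtain ⟨l, _, h⟩ := tt_diag K n i s
    exact ⟨fun a b => if b = a then l a else 0, fun a => by rw [h]; simp⟩
  · rw [tt_apply, tau_aug, hp]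

theorem mul_mem0 {g h} (hg : g ∈ TAut0 K n) (hh : h ∈ TAut0 K n) : g * h ∈ TAut0 K n :=
  ⟨mul_mem hg.1 hh.1, fun p hp => hg.2 _ (hh.2 p hp)⟩

/-- Conjugation by scaling. -/
noncomputable def cj (i : Fin n) (g : FreeAlgebra K (Fin n) ≃ₐ[K] FreeAlgebra K (Fin n))
    (s : Kˣ) : FreeAlgebra K (Fin n) ≃ₐ[K] FreeAlgebra K (Fin n) :=
  tt K n i s⁻¹ * g * tt K n i s

theorem cj_mem (i : Fin n) {g} (hg : g ∈ TAut0 K n) (s : Kˣ) : cj K n i g s ∈ TAut0 K n :=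
  mul_mem0 K n (mul_mem0 K n (tt_mem K n i _) hg) (tt_mem K n i _)

theorem cj_i (i : Fin n) (g) (s : Kˣ) : cj K n i g s (FreeAlgebra.ι K i) =
    (s : K) • tau K n i (s : K)⁻¹ (g (FreeAlgebra.ι K i)) := by
  simp [cj, AlgEquiv.mul_apply, tt_apply, tau_i]

theorem cj_j (i : Fin n) (g) (s : Kˣ) (j : Fin n) (h : j ≠ i) :
    cj K n i g s (FreeAlgebra.ι K j) = tau K n i (s : K)⁻¹ (g (FreeAlgebra.ι K j)) := by
  simp [cj, AlgEquiv.mul_apply, tt_apply, tau_j K n i _ j h]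

/-- One-parameter group property. -/
def Additive1 (i : Fin n) (g : FreeAlgebra K (Fin n) ≃ₐ[K] FreeAlgebra K (Fin n)) : Prop :=
  ∀ s t u : Kˣ, (u : K) = s + t → cj K n i g t * cj K n i g s = cj K n i g u

theorem fix_adjoin (i : Fin n) (f : FreeAlgebra K (Fin n) →ₐ[K] FreeAlgebra K (Fin n))
    (hf : ∀ j, j ≠ i → f (FreeAlgebra.ι K j) = FreeAlgebra.ι K j) (P)
    (hP : P ∈ Algebra.adjoin K (FreeAlgebra.ι K '' ({i}ᶜ : Set (Fin n)))) : f P = P := by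
  have : Algebra.adjoin K (FreeAlgebra.ι K '' ({i}ᶜ : Set (Fin n))) ≤
      AlgHom.equalizer f (AlgHom.id K _) := by
    rw [Algebra.adjoin_le_iff]
    rintro _ ⟨j, hj, rfl⟩
    exact hf j hj
  exact this hP

theorem algEquiv_ext_gen {f g : FreeAlgebra K (Fin n) ≃ₐ[K] FreeAlgebra K (Fin n)}
    (h : ∀ j, f (FreeAlgebra.ι K j) = g (FreeAlgebra.ι K j)) : f = g := by
  have : (f : FreeAlgebra K (Fin n) →ₐ[K] FreeAlgebra K (Fin n)) = g := by
    ext j; exact h j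
  ext p
  exact DFunLike.congr_fun this p

theorem elem_additive {g} (hg : IsElementary K n g) : ∃ i, Additive1 K n i g := by
  obtain ⟨i, hj, P, hP, hi⟩ := hg
  refine ⟨i, fun s t u hu => algEquiv_ext_gen K n fun j => ?_⟩
  have tauP : ∀ c, tau K n i c P = P := fun c => fix_adjoin K n i _ (tau_j K n i c) P hP
  have cjj : ∀ (s : Kˣ) j, j ≠ i → cj K n i g s (FreeAlgebra.ι K j) = FreeAlgebra.ι K j := by
    intro s j h
    rw [cj_j K n i g s j h, hj j h, tau_j K n i _ j h]
  have cji : ∀ (s : Kˣ), cj K n i g s (FreeAlgebra.ι K i) = FreeAlgebra.ι K i + (s : K) • P := by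
    intro s
    rw [cj_i, hi, map_add, tauP, tau_i, smul_add, smul_smul, mul_inv_cancel₀ s.ne_zero, one_smul]
  have cjP : ∀ (s : Kˣ), cj K n i g s P = P := fun s =>
    fix_adjoin K n i (cj K n i g s : FreeAlgebra K (Fin n) →ₐ[K] _) (cjj s) P hP
  rw [AlgEquiv.mul_apply]
  by_cases h : j = i
  · subst h
    rw [cji, cji, map_add, map_smul, cjP, cji, hu, add_smul]; abel
  · rw [cjj _ _ h, cjj _ _ h, cjj _ _ h]

/-- Grading by degree in the `i`-th variable. -/
noncomputable def Th (i : Fin n) :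
    FreeAlgebra K (Fin n) →ₐ[K] Polynomial (FreeAlgebra K (Fin n)) :=
  FreeAlgebra.lift K (fun j => if j = i then Polynomial.C (FreeAlgebra.ι K j) * Polynomial.X
    else Polynomial.C (FreeAlgebra.ι K j))

theorem eval_Th (i : Fin n) (s : K) (p) :
    Polynomial.eval (algebraMap K (FreeAlgebra K (Fin n)) s) (Th K n i p) = tau K n i s p := by
  induction p using FreeAlgebra.induction with
  | grade0 r =>
    rw [AlgHom.commutes, AlgHom.commutes, Polynomial.algebraMap_apply, Polynomial.eval_C]
  | grade1 j =>
    by_cases h : j = i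
    · subst h
      rw [tau_i]
      simp only [Th, FreeAlgebra.lift_ι_apply, if_true, Polynomial.eval_mul_X, Polynomial.eval_C]
      rw [← Algebra.commutes, Algebra.smul_def]
    · rw [tau_j K n i s j h]
      simp [Th, h]
  | mul a b ha hb =>
    rw [map_mul, map_mul, ← ha, ← hb]
    exact Polynomial.eval₂_mul_noncomm _ _ fun k => (Algebra.commutes s _).symm
  | add a b ha hb => rw [map_add, map_add, Polynomial.eval_add, ha, hb]

theorem tau_eq_sum (i : Fin n) (s : K) (p) : tau K n i s p =
    ∑ k ∈ Finset.range ((Th K n i p).natDegree + 1), s ^ k • (Th K n i p).coeff k := by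
  rw [← eval_Th, Polynomial.eval_eq_sum_range]
  refine Finset.sum_congr rfl fun k _ => ?_
  rw [← map_pow, ← Algebra.commutes, Algebra.smul_def]

theorem coeff_zero_mem (i : Fin n) (p) : (Th K n i p).coeff 0 ∈
    Algebra.adjoin K (FreeAlgebra.ι K '' ({i}ᶜ : Set (Fin n))) := by
  rw [Polynomial.coeff_zero_eq_eval_zero, ← map_zero (algebraMap K (FreeAlgebra K (Fin n))),
    eval_Th]
  induction p using FreeAlgebra.induction with
  | grade0 r => rw [AlgHom.commutes]; exact Subalgebra.algebraMap_mem _ r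
  | grade1 j =>
    by_cases h : j = i
    · subst h
      rw [tau_i, zero_smul]; exact zero_mem _
    · rw [tau_j K n i _ j h]
      exact Algebra.subset_adjoin ⟨j, h, rfl⟩
  | mul a b ha hb => rw [map_mul]; exact mul_mem ha hb
  | add a b ha hb => rw [map_add]; exact add_mem ha hb

theorem deg_le [Infinite K] (i : Fin n) (ε : ℕ) (p)
    (σ : FreeAlgebra K (Fin n) ≃ₐ[K] FreeAlgebra K (Fin n))
    (h : ∀ s : K, s ≠ 0 → s + 1 ≠ 0 →
      (s + 1) ^ ε • tau K n i (s + 1)⁻¹ p = σ (s ^ ε • tau K n i s⁻¹ p)) :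
    (Th K n i p).natDegree ≤ ε := by
  by_contra! hlt
  have := pole_lemma (K := K) (fun k => (Th K n i p).coeff k)
    (fun k => σ ((Th K n i p).coeff k)) _ ε hlt (by
      intro s hs hs1
      have := h s hs hs1
      rw [tau_eq_sum, tau_eq_sum, Finset.smul_sum, Finset.smul_sum, map_sum] at this
      simpa only [smul_smul, map_smul] using this)
  have h0 : Th K n i p = 0 := by
    rw [← Polynomial.leadingCoeff_eq_zero]; exact this
  rw [h0] at hlt
  simp at hlt

theorem additive_elem [Infinite K] {g} (i : Fin n) (hg : Additive1 K n i g) :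
    IsElementary K n g := by
  have cj1 : cj K n i g 1 = g := by
    refine algEquiv_ext_gen K n fun j => ?_
    have t1 : tau K n i 1 = AlgHom.id K _ := by ext j; simp [tau]
    by_cases h : j = i
    · subst h; rw [cj_i]; simp [t1]
    · rw [cj_j K n i g 1 j h]; simp [t1]
  -- a pair of units s, s+1
  obtain ⟨s0, hs0⟩ : ∃ s : K, s ∉ ({0, -1} : Set K) :=
    (Set.Finite.infinite_compl (by simp : ({0, -1} : Set K).Finite)).nonempty
  simp only [Set.mem_insert_iff, Set.mem_singleton_iff, not_or] at hs0
  have hs01 : s0 + 1 ≠ 0 := fun h0 => hs0.2 (eq_neg_of_add_eq_zero_left h0)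
  have key : ∀ s : K, (hs : s ≠ 0) → (hs1 : s + 1 ≠ 0) → ∀ p,
      cj K n i g (Units.mk0 _ hs1) p = g (cj K n i g (Units.mk0 s hs) p) := by
    intro s hs hs1 p
    rw [← hg (Units.mk0 s hs) 1 (Units.mk0 _ hs1) (by simp), cj1, AlgEquiv.mul_apply]
  have hfix : ∀ j, j ≠ i → g (FreeAlgebra.ι K j) = FreeAlgebra.ι K j := by
    intro j hj
    have hd := deg_le K n i 0 (g (FreeAlgebra.ι K j)) g (by
      intro s hs hs1
      have := key s hs hs1 (FreeAlgebra.ι K j)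
      rw [cj_j K n i g _ j hj, cj_j K n i g _ j hj] at this
      simpa using this)
    have hc : ∀ s : K, tau K n i s (g (FreeAlgebra.ι K j)) =
        (Th K n i (g (FreeAlgebra.ι K j))).coeff 0 := by
      intro s
      rw [tau_eq_sum, Nat.le_zero.1 hd]; simp
    have hcj : ∀ s, cj K n i g s (FreeAlgebra.ι K j) = g (FreeAlgebra.ι K j) := by
      intro s
      rw [← cj1, cj_j K n i g _ j hj, cj1, cj_j K n i g _ j hj, hc, hc]
    have := key s0 hs0.1 hs01 (FreeAlgebra.ι K j)
    rw [hcj, hcj] at this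
    exact (g.injective this).symm
  refine ⟨i, hfix, ?_⟩
  · refine ⟨_, coeff_zero_mem K n i (g (FreeAlgebra.ι K i)), ?_⟩
    have hd := deg_le K n i 1 (g (FreeAlgebra.ι K i)) g (by
      intro s hs hs1
      have := key s hs hs1 (FreeAlgebra.ι K i)
      rw [cj_i, cj_i] at this
      simpa using this)
    set f := Th K n i (g (FreeAlgebra.ι K i)) with hf
    have hc : ∀ s : K, tau K n i s (g (FreeAlgebra.ι K i)) = f.coeff 0 + s • f.coeff 1 := by
      intro s
      rw [tau_eq_sum, ← hf, Finset.sum_subset (s₂ := Finset.range 2)]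
      · simp [Finset.sum_range_succ]
      · intro k hk; simp at hk ⊢; omega
      · intro k _ hk
        rw [Polynomial.coeff_eq_zero_of_natDegree_lt, smul_zero]
        simp at hk; omega
    have hcj : ∀ s : Kˣ, cj K n i g s (FreeAlgebra.ι K i) = (s : K) • f.coeff 0 + f.coeff 1 := by
      intro s
      rw [cj_i, hc, smul_add, smul_smul, mul_inv_cancel₀ s.ne_zero, one_smul]
    have hgi : g (FreeAlgebra.ι K i) = f.coeff 0 + f.coeff 1 := by
      have := hcj 1
      rw [cj1] at this; simpa using this
    have hg0 : g (f.coeff 0) = f.coeff 0 :=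
      fix_adjoin K n i (g : FreeAlgebra K (Fin n) →ₐ[K] _) hfix _ (coeff_zero_mem K n i _)
    have h1 := key s0 hs0.1 hs01 (FreeAlgebra.ι K i)
    rw [hcj, hcj, map_add, map_smul, hg0, Units.val_mk0, Units.val_mk0, add_smul, one_smul,
      add_assoc] at h1
    have h2 := add_left_cancel h1
    rw [← hgi] at h2
    have h3 : FreeAlgebra.ι K i = f.coeff 1 := g.injective h2
    rw [hgi, ← h3, add_comm]

/-- A group automorphism of `TAut₀(K⟨x₁,…,xₙ⟩)` (`K` infinite, `n > 3`) fixing every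
diagonal automorphism maps the set of origin-preserving elementary automorphisms
bijectively onto itself. -/
theorem preserves_elementary [Infinite K] (hn : 3 < n)
    (Φ : (FreeAlgebra K (Fin n) ≃ₐ[K] FreeAlgebra K (Fin n)) →
         (FreeAlgebra K (Fin n) ≃ₐ[K] FreeAlgebra K (Fin n)))
    (hmem : ∀ g ∈ TAut0 K n, Φ g ∈ TAut0 K n)
    (hsurj : ∀ g ∈ TAut0 K n, ∃ h ∈ TAut0 K n, Φ h = g)
    (hinj : Set.InjOn Φ (TAut0 K n))
    (hmul : ∀ g ∈ TAut0 K n, ∀ h ∈ TAut0 K n, Φ (g * h) = Φ g * Φ h)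
    (hdiag : ∀ φ, IsDiagonal K n φ → Φ φ = φ) :
    Set.BijOn Φ {φ | IsElementary K n φ ∧ OriginPres K n φ}
      {φ | IsElementary K n φ ∧ OriginPres K n φ} := by
  have hΦcj : ∀ i, ∀ g ∈ TAut0 K n, ∀ s, Φ (cj K n i g s) = cj K n i (Φ g) s := by
    intro i g hg s
    rw [cj, hmul _ (mul_mem0 K n (tt_mem K n i _) hg) _ (tt_mem K n i _),
      hmul _ (tt_mem K n i _) _ hg, hdiag _ (tt_diag K n i _), hdiag _ (tt_diag K n i _), cj]
  have hsub : ∀ g, IsElementary K n g ∧ OriginPres K n g → g ∈ TAut0 K n := fun g hg =>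
    ⟨Subgroup.subset_closure (Or.inr hg.1), hg.2⟩
  refine ⟨fun g hg => ?_, fun g hg h hh => hinj (hsub g hg) (hsub h hh), fun g hg => ?_⟩
  · have hg0 := hsub g hg
    obtain ⟨i, hi⟩ := elem_additive K n hg.1
    refine ⟨additive_elem K n i fun s t u hu => ?_, (hmem g hg0).2⟩
    rw [← hΦcj i g hg0, ← hΦcj i g hg0, ← hΦcj i g hg0, ← hi s t u hu,
      hmul _ (cj_mem K n i hg0 _) _ (cj_mem K n i hg0 _)]
  · obtain ⟨h, hh, rfl⟩ := hsurj g (hsub g hg)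
    obtain ⟨i, hi⟩ := elem_additive K n hg.1
    refine ⟨h, ⟨additive_elem K n i fun s t u hu => ?_, hh.2⟩, rfl⟩
    apply hinj (mul_mem0 K n (cj_mem K n i hh _) (cj_mem K n i hh _)) (cj_mem K n i hh _)
    rw [hmul _ (cj_mem K n i hh _) _ (cj_mem K n i hh _), hΦcj i h hh, hΦcj i h hh, hΦcj i h hh,
      hi s t u hu]

end Stmt6
end

section
/- Let K be a field. In Aut(K[x,y,z]), the subgroup generated by all linear automorphisms together with the automorphism ψ : x ↦ x, y ↦ y, z ↦ z + xy contains, for every b ∈ K and every integer m ≥ 1, the automorphism φ_m^b : x ↦ x, y ↦ y, z ↦ z + b·x^m. -/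
open MvPolynomial

namespace Stmt9

variable (K : Type*) [Field K]

/-- Linear automorphisms of `K[x,y,z]`: each variable is sent to a linear form. -/
def IsLinearAut (φ : MvPolynomial (Fin 3) K ≃ₐ[K] MvPolynomial (Fin 3) K) : Prop :=
  ∃ a : Fin 3 → Fin 3 → K, ∀ i, φ (X i) = ∑ j, C (a i j) * X j

/-- The automorphism `ψ : x ↦ x, y ↦ y, z ↦ z + xy`. -/
def IsPsi (φ : MvPolynomial (Fin 3) K ≃ₐ[K] MvPolynomial (Fin 3) K) : Prop :=
  φ (X 0) = X 0 ∧ φ (X 1) = X 1 ∧ φ (X 2) = X 2 + X 0 * X 1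

/-- The subgroup of `Aut(K[x,y,z])` generated by all linear automorphisms and `ψ`. -/
noncomputable def G : Subgroup (MvPolynomial (Fin 3) K ≃ₐ[K] MvPolynomial (Fin 3) K) :=
  Subgroup.closure {φ | IsLinearAut K φ ∨ IsPsi K φ}

/-- The shear `z ↦ z + p`, for `p` not involving `z`. -/
lemma exists_shear (p : MvPolynomial (Fin 3) K)
    (hp : ∀ r : MvPolynomial (Fin 3) K, bind₁ ![X 0, X 1, r] p = p) :
    ∃ φ : MvPolynomial (Fin 3) K ≃ₐ[K] MvPolynomial (Fin 3) K,
      φ (X 0) = X 0 ∧ φ (X 1) = X 1 ∧ φ (X 2) = X 2 + p := by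
  refine ⟨AlgEquiv.ofAlgHom (aeval ![X 0, X 1, X 2 + p]) (aeval ![X 0, X 1, X 2 - p]) ?_ ?_,
    ?_, ?_, ?_⟩
  · apply MvPolynomial.algHom_ext
    intro i
    fin_cases i <;> simp [hp]
  · apply MvPolynomial.algHom_ext
    intro i
    fin_cases i <;> simp [hp]
  all_goals simp

lemma aut_ext {f g : MvPolynomial (Fin 3) K ≃ₐ[K] MvPolynomial (Fin 3) K}
    (h0 : f (X 0) = g (X 0)) (h1 : f (X 1) = g (X 1)) (h2 : f (X 2) = g (X 2)) : f = g := by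
  have : (f : MvPolynomial (Fin 3) K →ₐ[K] MvPolynomial (Fin 3) K) = g := by
    apply MvPolynomial.algHom_ext
    intro i
    fin_cases i
    · exact h0
    · exact h1
    · exact h2
  apply AlgEquiv.ext
  intro x
  exact DFunLike.congr_fun this x

/-- The subgroup generated by linear automorphisms and `ψ : z ↦ z + xy` contains every
automorphism `φ_m^b : x ↦ x, y ↦ y, z ↦ z + b·x^m` (`b ∈ K`, `m ≥ 1`). -/
theorem contains_phi_m_b (b : K) (m : ℕ) (hm : 1 ≤ m)
    (φ : MvPolynomial (Fin 3) K ≃ₐ[K] MvPolynomial (Fin 3) K)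
    (hφ : φ (X 0) = X 0 ∧ φ (X 1) = X 1 ∧ φ (X 2) = X 2 + C b * X 0 ^ m) :
    φ ∈ G K := by
  induction m, hm using Nat.le_induction generalizing φ with
  | base =>
    apply Subgroup.subset_closure
    left
    obtain ⟨h0, h1, h2⟩ := hφ
    refine ⟨![![1, 0, 0], ![0, 1, 0], ![b, 0, 1]], fun i => ?_⟩
    fin_cases i
    · simp [Fin.sum_univ_three, h0]
    · simp [Fin.sum_univ_three, h1]
    · simp [Fin.sum_univ_three, h2, add_comm]
  | succ m hm ih =>
    obtain ⟨h0, h1, h2⟩ := hφ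
    obtain ⟨ψ, p0, p1, p2⟩ := exists_shear K (X 0 * X 1) (by intro r; simp)
    obtain ⟨θ, t0, t1, t2⟩ := exists_shear K (C b * X 0 ^ m)
      (by intro r; simp [MvPolynomial.algebraMap_eq])
    have hψ : ψ ∈ G K := Subgroup.subset_closure (Or.inr ⟨p0, p1, p2⟩)
    have hθ : θ ∈ G K := ih θ ⟨t0, t1, t2⟩
    obtain ⟨τ, s0, s1, s2⟩ : ∃ τ : MvPolynomial (Fin 3) K ≃ₐ[K] MvPolynomial (Fin 3) K,
        τ (X 0) = X 0 ∧ τ (X 1) = X 2 ∧ τ (X 2) = X 1 := by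
      refine ⟨renameEquiv K (Equiv.swap 1 2), ?_, ?_, ?_⟩
      · simp [Equiv.swap_apply_of_ne_of_ne]
      · simp
      · simp
    have hτ : τ ∈ G K := by
      apply Subgroup.subset_closure
      left
      refine ⟨![![1, 0, 0], ![0, 0, 1], ![0, 1, 0]], fun i => ?_⟩
      fin_cases i
      · simp [Fin.sum_univ_three, s0]
      · simp [Fin.sum_univ_three, s1]
      · simp [Fin.sum_univ_three, s2]
    have cC : ∀ f : MvPolynomial (Fin 3) K ≃ₐ[K] MvPolynomial (Fin 3) K, f (C b) = C b :=
      fun f => f.commutes b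
    have hσ : τ * θ * τ ∈ G K := mul_mem (mul_mem hτ hθ) hτ
    have key : φ * ψ * (τ * θ * τ) = (τ * θ * τ) * ψ := by
      apply aut_ext
      · simp [AlgEquiv.mul_apply, h0, p0, t0, s0]
      · simp [AlgEquiv.mul_apply, h0, h1, p0, p1, t0, t2, s0, s1, s2, cC]
      · simp [AlgEquiv.mul_apply, h0, h1, h2, p0, p1, p2, t0, t1, t2, s0, s1, s2, cC]
        ring
    have : φ = (τ * θ * τ) * ψ * (τ * θ * τ)⁻¹ * ψ⁻¹ := by
      rw [← key]; group
    rw [this]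
    exact mul_mem (mul_mem (mul_mem hσ hψ) (inv_mem hσ)) (inv_mem hψ)

end Stmt9
end

section
/- Let K be an infinite field with char(K) ≠ 2. Then the subgroup of Aut(K[x,y,z]) generated by all linear automorphisms together with the automorphism ψ : x ↦ x, y ↦ y, z ↦ z + xy contains, for every b ∈ K and every integer m ≥ 1, the automorphism α_m^b : x ↦ x, y ↦ y, z ↦ z + b·y·x^m. -/
open MvPolynomial

namespace Stmt11

variable (K : Type*) [Field K]

/-- Linear automorphisms of `K[x,y,z]`: each variable is sent to a linear form. -/
def IsLinearAut (φ : MvPolynomial (Fin 3) K ≃ₐ[K] MvPolynomial (Fin 3) K) : Prop :=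
  ∃ a : Fin 3 → Fin 3 → K, ∀ i, φ (X i) = ∑ j, C (a i j) * X j

/-- The automorphism `ψ : x ↦ x, y ↦ y, z ↦ z + xy`. -/
def IsPsi (φ : MvPolynomial (Fin 3) K ≃ₐ[K] MvPolynomial (Fin 3) K) : Prop :=
  φ (X 0) = X 0 ∧ φ (X 1) = X 1 ∧ φ (X 2) = X 2 + X 0 * X 1

/-- The subgroup of `Aut(K[x,y,z])` generated by all linear automorphisms and `ψ`. -/
noncomputable def G : Subgroup (MvPolynomial (Fin 3) K ≃ₐ[K] MvPolynomial (Fin 3) K) :=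
  Subgroup.closure {φ | IsLinearAut K φ ∨ IsPsi K φ}

/-- `z ↦ z + f` (fixing `x`, `y`) lies in the group `G`. -/
def Sh (f : MvPolynomial (Fin 3) K) : Prop :=
  ∃ φ ∈ G K, φ (X 0) = X 0 ∧ φ (X 1) = X 1 ∧ φ (X 2) = X 2 + f

/-- `f` is fixed by every automorphism fixing `x` and `y`. -/
def Fixd (f : MvPolynomial (Fin 3) K) : Prop :=
  ∀ ρ : MvPolynomial (Fin 3) K ≃ₐ[K] MvPolynomial (Fin 3) K,
    ρ (X 0) = X 0 → ρ (X 1) = X 1 → ρ f = f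

/-- The shear `z ↦ z + f`. -/
noncomputable def shHom (f : MvPolynomial (Fin 3) K) :
    MvPolynomial (Fin 3) K →ₐ[K] MvPolynomial (Fin 3) K :=
  aeval ![X 0, X 1, X 2 + f]

lemma shHom0 (f : MvPolynomial (Fin 3) K) : shHom K f (X 0) = X 0 := by simp [shHom]
lemma shHom1 (f : MvPolynomial (Fin 3) K) : shHom K f (X 1) = X 1 := by simp [shHom]
lemma shHom2 (f : MvPolynomial (Fin 3) K) : shHom K f (X 2) = X 2 + f := by simp [shHom]

lemma exists_shear (f : MvPolynomial (Fin 3) K) (h : ∀ g, shHom K g f = f) :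
    ∃ φ : MvPolynomial (Fin 3) K ≃ₐ[K] MvPolynomial (Fin 3) K,
      φ (X 0) = X 0 ∧ φ (X 1) = X 1 ∧ φ (X 2) = X 2 + f := by
  refine ⟨AlgEquiv.ofAlgHom (shHom K f) (shHom K (-f)) ?_ ?_, ?_, ?_, ?_⟩
  · ext1 i
    fin_cases i <;> simp [shHom0, shHom1, shHom2, h]
  · ext1 i
    fin_cases i <;> simp [shHom0, shHom1, shHom2, h]
  · simp [shHom0]
  · simp [shHom1]
  · simp [shHom2]

lemma Sh_lin (b : K) : Sh K (C b * X 0) := by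
  obtain ⟨φ, h0, h1, h2⟩ := exists_shear K (C b * X 0) (by
    intro g; rw [map_mul, shHom0]; simp [algHom_C, algebraMap_eq])
  refine ⟨φ, Subgroup.subset_closure (Or.inl ⟨![![1, 0, 0], ![0, 1, 0], ![b, 0, 1]], ?_⟩),
    h0, h1, h2⟩
  intro i
  fin_cases i <;> simp [h0, h1, h2, Fin.sum_univ_three]
  ring

lemma Sh_psi : Sh K (X 0 * X 1) := by
  obtain ⟨φ, h0, h1, h2⟩ := exists_shear K (X 0 * X 1) (by
    intro g; rw [map_mul, shHom0, shHom1])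
  exact ⟨φ, Subgroup.subset_closure (Or.inr ⟨h0, h1, h2⟩), h0, h1, h2⟩

/-- Permutation of the variables. -/
lemma perm_mem (e : Equiv.Perm (Fin 3)) : renameEquiv K e ∈ G K := by
  refine Subgroup.subset_closure (Or.inl ⟨fun i j => if j = e i then 1 else 0, ?_⟩)
  intro i
  simp [ite_mul, apply_ite C]

lemma inv_apply_of {φ : MvPolynomial (Fin 3) K ≃ₐ[K] MvPolynomial (Fin 3) K}
    {p q : MvPolynomial (Fin 3) K} (h : φ p = q) : φ⁻¹ q = p := by
  rw [← h]; exact φ.symm_apply_apply p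

lemma Sh_sub {f g : MvPolynomial (Fin 3) K} (hf : Sh K f) (hg : Sh K g) (fg : Fixd K g) :
    Sh K (f - g) := by
  obtain ⟨φ, hφ, a0, a1, a2⟩ := hf
  obtain ⟨ψ, hψ, b0, b1, b2⟩ := hg
  refine ⟨φ * ψ⁻¹, mul_mem hφ (inv_mem hψ), ?_, ?_, ?_⟩
  · rw [AlgEquiv.mul_apply, inv_apply_of K b0, a0]
  · rw [AlgEquiv.mul_apply, inv_apply_of K b1, a1]
  · have : ψ⁻¹ (X 2) = X 2 - g :=
      inv_apply_of K (by rw [map_sub, b2, fg ψ b0 b1]; ring)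
    rw [AlgEquiv.mul_apply, this, map_sub, a2, fg φ a0 a1]; ring

lemma Sh_subst {b : K} {k : ℕ} {f f' : MvPolynomial (Fin 3) K}
    (hg : Sh K (C b * X 0 ^ k)) (hf : Sh K f)
    (h : ∀ τ : MvPolynomial (Fin 3) K ≃ₐ[K] MvPolynomial (Fin 3) K,
      τ (X 0) = X 0 → τ (X 1) = X 1 + C b * X 0 ^ k → τ f = f') : Sh K f' := by
  obtain ⟨φ, hφ, a0, a1, a2⟩ := hg
  obtain ⟨ψ, hψ, b0, b1, b2⟩ := hf
  have key : ∃ τ ∈ G K, τ (X 0) = X 0 ∧ τ (X 1) = X 1 + C b * X 0 ^ k ∧ τ (X 2) = X 2 := by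
    have s0 : Equiv.swap (1 : Fin 3) 2 0 = 0 := by decide
    have s1 : Equiv.swap (1 : Fin 3) 2 1 = 2 := by decide
    have s2 : Equiv.swap (1 : Fin 3) 2 2 = 1 := by decide
    refine ⟨renameEquiv K (Equiv.swap 1 2) * φ * renameEquiv K (Equiv.swap 1 2),
      mul_mem (mul_mem (perm_mem K _) hφ) (perm_mem K _), ?_, ?_, ?_⟩ <;>
    simp only [AlgEquiv.mul_apply, renameEquiv_apply, rename_X, rename_C, s0, s1, s2, a0, a1, a2,
      map_add, map_mul, map_pow]
  obtain ⟨τ, hτ, c0, c1, c2⟩ := key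
  refine ⟨τ * ψ * τ⁻¹, mul_mem (mul_mem hτ hψ) (inv_mem hτ), ?_, ?_, ?_⟩
  · rw [AlgEquiv.mul_apply, AlgEquiv.mul_apply, inv_apply_of K c0, b0, c0]
  · have hC (ρ : MvPolynomial (Fin 3) K ≃ₐ[K] MvPolynomial (Fin 3) K) : ρ (C b) = C b :=
      ρ.commutes b
    have : τ⁻¹ (X 1) = X 1 - C b * X 0 ^ k :=
      inv_apply_of K (by simp only [map_sub, map_mul, map_pow, c0, c1, hC]; ring)
    rw [AlgEquiv.mul_apply, AlgEquiv.mul_apply, this]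
    simp only [map_sub, map_mul, map_pow, c0, c1, b0, b1, hC]; ring
  · rw [AlgEquiv.mul_apply, AlgEquiv.mul_apply, inv_apply_of K c2, b2, map_add, c2, h τ c0 c1]

lemma Sh_pow (b : K) (k : ℕ) : Sh K (C b * X 0 ^ (k + 1)) := by
  induction k with
  | zero => simpa using Sh_lin K b
  | succ k ih =>
    have h1 : Sh K (X 0 * (X 1 + C b * X 0 ^ (k + 1))) :=
      Sh_subst K ih (Sh_psi K) (by intro τ h0 h1; rw [map_mul, h0, h1])
    have h2 := Sh_sub K h1 (Sh_psi K) (by intro τ h0 h1; rw [map_mul, h0, h1])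
    convert h2 using 1
    ring

lemma Sh_sq : Sh K (X 1 ^ 2) := by
  obtain ⟨φ, hφ, a0, a1, a2⟩ := Sh_pow K 1 1
  have s0 : Equiv.swap (0 : Fin 3) 1 0 = 1 := by decide
  have s1 : Equiv.swap (0 : Fin 3) 1 1 = 0 := by decide
  have s2 : Equiv.swap (0 : Fin 3) 1 2 = 2 := by decide
  refine ⟨renameEquiv K (Equiv.swap 0 1) * φ * renameEquiv K (Equiv.swap 0 1),
    mul_mem (mul_mem (perm_mem K _) hφ) (perm_mem K _), ?_, ?_, ?_⟩ <;>
  simp [AlgEquiv.mul_apply, s0, s1, s2, a0, a1, a2]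

/-- For `K` infinite with `char K ≠ 2`, the subgroup generated by linear automorphisms
and `ψ : z ↦ z + xy` contains every automorphism
`α_m^b : x ↦ x, y ↦ y, z ↦ z + b·y·x^m` (`b ∈ K`, `m ≥ 1`). -/
theorem contains_alpha_m_b [Infinite K] (hchar : (2 : K) ≠ 0)
    (b : K) (m : ℕ) (hm : 1 ≤ m)
    (φ : MvPolynomial (Fin 3) K ≃ₐ[K] MvPolynomial (Fin 3) K)
    (hφ : φ (X 0) = X 0 ∧ φ (X 1) = X 1 ∧
          φ (X 2) = X 2 + C b * X 1 * X 0 ^ m) :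
    φ ∈ G K := by
  obtain ⟨k, rfl⟩ : ∃ k, m = k + 1 := ⟨m - 1, by omega⟩
  have hC (c : K) (ρ : MvPolynomial (Fin 3) K ≃ₐ[K] MvPolynomial (Fin 3) K) : ρ (C c) = C c :=
    ρ.commutes c
  have h1 : Sh K ((X 1 + C (b / 2) * X 0 ^ (k + 1)) ^ 2) :=
    Sh_subst K (Sh_pow K (b / 2) k) (Sh_sq K) (by intro τ h0 h1; rw [map_pow, h1])
  have h2 := Sh_sub K h1 (Sh_sq K) (by intro τ h0 h1; rw [map_pow, h1])
  have h3 := Sh_sub K h2 (Sh_pow K ((b / 2) ^ 2) (2 * k + 1))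
    (by intro τ h0 h1; simp only [map_mul, map_pow, h0, hC])
  obtain ⟨χ, hχ, c0, c1, c2⟩ := h3
  have hb : (C b : MvPolynomial (Fin 3) K) = C (b / 2) * 2 := by
    rw [show (2 : MvPolynomial (Fin 3) K) = C 2 from (map_ofNat C 2).symm, ← C_mul, div_mul_cancel₀ b hchar]
  have : φ = χ := by
    apply AlgEquiv.coe_toAlgHom_injective
    ext1 i
    fin_cases i
    · simp [hφ.1, c0]
    · simp [hφ.2.1, c1]
    · change φ (X 2) = χ (X 2)
      rw [hφ.2.2, c2, hb, C_pow]
      ring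
  rw [this]
  exact hχ

end Stmt11
end

section
/- Let K be a field and let G be a subgroup of the group of K-algebra automorphisms of the free associative algebra K⟨x,y,z,t⟩ that contains all linear automorphisms and the automorphism x ↦ x, y ↦ y, z ↦ z + xy, t ↦ t. Then for every element P ∈ K⟨x,y⟩ (a noncommutative polynomial in x and y only) with zero constant term, G contains the automorphism x ↦ x, y ↦ y, z ↦ z + P(x,y), t ↦ t. -/
namespace Stmt14

variable (K : Type*) [Field K]

/-- The augmentation homomorphism of `K⟨x,y,z,t⟩`, sending every generator to `0`. -/
noncomputable def aug : FreeAlgebra K (Fin 4) →ₐ[K] K :=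
  FreeAlgebra.lift K (fun _ : Fin 4 => (0 : K))

/-- Linear automorphisms of `K⟨x,y,z,t⟩`: each generator is sent to a linear form. -/
def IsLinearAut (φ : FreeAlgebra K (Fin 4) ≃ₐ[K] FreeAlgebra K (Fin 4)) : Prop :=
  ∃ a : Fin 4 → Fin 4 → K, ∀ i, φ (FreeAlgebra.ι K i) = ∑ j, a i j • FreeAlgebra.ι K j

lemma exists_aut (f g : Fin 4 → FreeAlgebra K (Fin 4))
    (h1 : ∀ i, FreeAlgebra.lift K f (g i) = FreeAlgebra.ι K i)
    (h2 : ∀ i, FreeAlgebra.lift K g (f i) = FreeAlgebra.ι K i) :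
    ∃ e : FreeAlgebra K (Fin 4) ≃ₐ[K] FreeAlgebra K (Fin 4),
      ∀ i, e (FreeAlgebra.ι K i) = f i := by
  refine ⟨AlgEquiv.ofAlgHom (FreeAlgebra.lift K f) (FreeAlgebra.lift K g) ?_ ?_, ?_⟩
  · ext i; simp [h1]
  · ext i; simp [h2]
  · intro i; simp

lemma aut_ext (e₁ e₂ : FreeAlgebra K (Fin 4) ≃ₐ[K] FreeAlgebra K (Fin 4))
    (h0 : e₁ (FreeAlgebra.ι K 0) = e₂ (FreeAlgebra.ι K 0))
    (h1 : e₁ (FreeAlgebra.ι K 1) = e₂ (FreeAlgebra.ι K 1))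
    (h2 : e₁ (FreeAlgebra.ι K 2) = e₂ (FreeAlgebra.ι K 2))
    (h3 : e₁ (FreeAlgebra.ι K 3) = e₂ (FreeAlgebra.ι K 3)) : e₁ = e₂ := by
  have : (e₁ : FreeAlgebra K (Fin 4) →ₐ[K] FreeAlgebra K (Fin 4)) = e₂ := by
    ext i
    fin_cases i
    · simpa using h0
    · simpa using h1
    · simpa using h2
    · simpa using h3
  ext a
  exact DFunLike.congr_fun this a

/-- The subalgebra `K⟨x,y⟩`. -/
abbrev Axy : Subalgebra K (FreeAlgebra K (Fin 4)) :=
  Algebra.adjoin K ({FreeAlgebra.ι K 0, FreeAlgebra.ι K 1} : Set (FreeAlgebra K (Fin 4)))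

lemma fix_of_mem (f : FreeAlgebra K (Fin 4) →ₐ[K] FreeAlgebra K (Fin 4))
    (h0 : f (FreeAlgebra.ι K 0) = FreeAlgebra.ι K 0)
    (h1 : f (FreeAlgebra.ι K 1) = FreeAlgebra.ι K 1)
    (P : FreeAlgebra K (Fin 4)) (hP : P ∈ Axy K) : f P = P := by
  have : Axy K ≤ AlgHom.equalizer f (AlgHom.id K _) := by
    rw [Algebra.adjoin_le_iff]
    rintro a (rfl | rfl)
    · simpa using h0
    · simpa using h1
  simpa using this hP

lemma fix_of_mem_equiv (f : FreeAlgebra K (Fin 4) ≃ₐ[K] FreeAlgebra K (Fin 4))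
    (h0 : f (FreeAlgebra.ι K 0) = FreeAlgebra.ι K 0)
    (h1 : f (FreeAlgebra.ι K 1) = FreeAlgebra.ι K 1)
    (P : FreeAlgebra K (Fin 4)) (hP : P ∈ Axy K) : f P = P :=
  fix_of_mem K (f : FreeAlgebra K (Fin 4) →ₐ[K] FreeAlgebra K (Fin 4)) h0 h1 P hP

/-- `φ` is `z ↦ z + P`. -/
def IsZ (P : FreeAlgebra K (Fin 4))
    (φ : FreeAlgebra K (Fin 4) ≃ₐ[K] FreeAlgebra K (Fin 4)) : Prop :=
  φ (FreeAlgebra.ι K 0) = FreeAlgebra.ι K 0 ∧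
  φ (FreeAlgebra.ι K 1) = FreeAlgebra.ι K 1 ∧
  φ (FreeAlgebra.ι K 2) = FreeAlgebra.ι K 2 + P ∧
  φ (FreeAlgebra.ι K 3) = FreeAlgebra.ι K 3

lemma exists_isZ (P : FreeAlgebra K (Fin 4)) (hP : P ∈ Axy K) : ∃ φ, IsZ K P φ := by
  have key : ∀ Q : FreeAlgebra K (Fin 4), FreeAlgebra.lift K
      ![FreeAlgebra.ι K 0, FreeAlgebra.ι K 1, FreeAlgebra.ι K 2 + Q, FreeAlgebra.ι K 3] P = P := by
    intro Q
    apply fix_of_mem K _ _ _ P hP <;> simp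
  obtain ⟨e, he⟩ := exists_aut K
    ![FreeAlgebra.ι K 0, FreeAlgebra.ι K 1, FreeAlgebra.ι K 2 + P, FreeAlgebra.ι K 3]
    ![FreeAlgebra.ι K 0, FreeAlgebra.ι K 1, FreeAlgebra.ι K 2 + -P, FreeAlgebra.ι K 3]
    (by intro i; fin_cases i <;> simp [key])
    (by intro i; fin_cases i <;> simp [key])
  exact ⟨e, by simp [he], by simp [he], by simp [he], by simp [he]⟩

lemma exists_perm (s : Equiv.Perm (Fin 4)) :
    ∃ e : FreeAlgebra K (Fin 4) ≃ₐ[K] FreeAlgebra K (Fin 4), IsLinearAut K e ∧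
      ∀ i, e (FreeAlgebra.ι K i) = FreeAlgebra.ι K (s i) := by
  obtain ⟨e, he⟩ := exists_aut K (fun i => FreeAlgebra.ι K (s i))
    (fun i => FreeAlgebra.ι K (s.symm i)) (by simp) (by simp)
  refine ⟨e, ⟨fun i j => if j = s i then 1 else 0, fun i => ?_⟩, he⟩
  simp [he]

/-- The property that `G` contains `z ↦ z + P`, with `P` in `K⟨x,y⟩` augmented. -/
def Good (G : Subgroup (FreeAlgebra K (Fin 4) ≃ₐ[K] FreeAlgebra K (Fin 4)))
    (P : FreeAlgebra K (Fin 4)) : Prop :=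
  P ∈ Axy K ∧ aug K P = 0 ∧ ∀ φ, IsZ K P φ → φ ∈ G

section
variable (G : Subgroup (FreeAlgebra K (Fin 4) ≃ₐ[K] FreeAlgebra K (Fin 4)))

lemma mem_x : FreeAlgebra.ι K 0 ∈ Axy K := Algebra.subset_adjoin (by simp)
lemma mem_y : FreeAlgebra.ι K 1 ∈ Axy K := Algebra.subset_adjoin (by simp)

lemma good_zero (hlin : ∀ φ, IsLinearAut K φ → φ ∈ G) : Good K G 0 := by
  refine ⟨zero_mem _, by simp, ?_⟩
  rintro φ ⟨h0, h1, h2, h3⟩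
  have : φ = 1 := aut_ext K _ _ (by simp [h0]) (by simp [h1]) (by simp [h2]) (by simp [h3])
  rw [this]; exact one_mem _

lemma good_add {P Q : FreeAlgebra K (Fin 4)} (hP : Good K G P) (hQ : Good K G Q) :
    Good K G (P + Q) := by
  refine ⟨add_mem hP.1 hQ.1, by simp [hP.2.1, hQ.2.1], ?_⟩
  rintro φ ⟨h0, h1, h2, h3⟩
  obtain ⟨e, he⟩ := exists_isZ K P hP.1
  obtain ⟨f, hf⟩ := exists_isZ K Q hQ.1
  have : φ = e * f := by
    have hQ' := fix_of_mem_equiv K e he.1 he.2.1 Q hQ.1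
    obtain ⟨a0, a1, a2, a3⟩ := he
    obtain ⟨b0, b1, b2, b3⟩ := hf
    apply aut_ext <;> simp [*, add_assoc]
  rw [this]
  exact mul_mem (hP.2.2 e he) (hQ.2.2 f hf)

lemma good_smul (hlin : ∀ φ, IsLinearAut K φ → φ ∈ G) (c : K) {P : FreeAlgebra K (Fin 4)}
    (hP : Good K G P) : Good K G (c • P) := by
  by_cases hc : c = 0
  · rw [hc, zero_smul]; exact good_zero K G hlin
  refine ⟨Subalgebra.smul_mem _ hP.1 c, by simp [hP.2.1], ?_⟩
  rintro φ ⟨h0, h1, h2, h3⟩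
  obtain ⟨e, he⟩ := exists_isZ K P hP.1
  obtain ⟨l, hl⟩ := exists_aut K
    ![FreeAlgebra.ι K 0, FreeAlgebra.ι K 1, c • FreeAlgebra.ι K 2, FreeAlgebra.ι K 3]
    ![FreeAlgebra.ι K 0, FreeAlgebra.ι K 1, c⁻¹ • FreeAlgebra.ι K 2, FreeAlgebra.ι K 3]
    (by intro i; fin_cases i <;> simp [smul_smul, hc])
    (by intro i; fin_cases i <;> simp [smul_smul, hc])
  have hlG : l ∈ G := by
    apply hlin
    refine ⟨fun i j => if j = i then (if i = 2 then c else 1) else 0, fun i => ?_⟩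
    rw [hl]
    fin_cases i <;> simp
  have l0 : l (FreeAlgebra.ι K 0) = FreeAlgebra.ι K 0 := by simp [hl]
  have l1 : l (FreeAlgebra.ι K 1) = FreeAlgebra.ι K 1 := by simp [hl]
  have l2 : l (FreeAlgebra.ι K 2) = c • FreeAlgebra.ι K 2 := by simp [hl]
  have l3 : l (FreeAlgebra.ι K 3) = FreeAlgebra.ι K 3 := by simp [hl]
  have heG := hP.2.2 e he
  have hlP := fix_of_mem_equiv K l l0 l1 P hP.1
  clear hl
  have : l * φ = e * l := by
    obtain ⟨a0, a1, a2, a3⟩ := he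
    apply aut_ext <;> simp [*]
  have : φ = l⁻¹ * (e * l) := by rw [← this]; group
  rw [this]
  exact mul_mem (inv_mem hlG) (mul_mem heG hlG)

lemma good_lin (hlin : ∀ φ, IsLinearAut K φ → φ ∈ G) (i : Fin 4) (hi : i = 0 ∨ i = 1) :
    Good K G (FreeAlgebra.ι K i) := by
  refine ⟨?_, by simp [aug], ?_⟩
  · rcases hi with rfl | rfl
    exacts [mem_x K, mem_y K]
  rintro φ ⟨h0, h1, h2, h3⟩
  apply hlin
  refine ⟨fun k j => (if j = k then 1 else 0) + if k = 2 then (if j = i then 1 else 0) else 0,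
    fun k => ?_⟩
  fin_cases k <;> simp [*, add_smul, Finset.sum_add_distrib]

/-- The commutator step, given `ψ : z ↦ z + w t` in `G`. -/
lemma good_mul_aux (hlin : ∀ φ, IsLinearAut K φ → φ ∈ G)
    (w : FreeAlgebra K (Fin 4)) (hw : w ∈ Axy K)
    (ψ : FreeAlgebra K (Fin 4) ≃ₐ[K] FreeAlgebra K (Fin 4)) (hψ : ψ ∈ G)
    (hψw : IsZ K (w * FreeAlgebra.ι K 3) ψ)
    {Q : FreeAlgebra K (Fin 4)} (hQ : Good K G Q) : Good K G (w * Q) := by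
  refine ⟨mul_mem hw hQ.1, by simp [hQ.2.1], ?_⟩
  rintro φ ⟨h0, h1, h2, h3⟩
  obtain ⟨s, hs, hs'⟩ := exists_perm K (Equiv.swap 2 3)
  obtain ⟨e, he⟩ := exists_isZ K Q hQ.1
  have s0 : s (FreeAlgebra.ι K 0) = FreeAlgebra.ι K 0 := hs' 0
  have s1 : s (FreeAlgebra.ι K 1) = FreeAlgebra.ι K 1 := hs' 1
  have s2 : s (FreeAlgebra.ι K 2) = FreeAlgebra.ι K 3 := hs' 2
  have s3 : s (FreeAlgebra.ι K 3) = FreeAlgebra.ι K 2 := hs' 3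
  have heG := hQ.2.2 e he
  have hsG := hlin s hs
  obtain ⟨a0, a1, a2, a3⟩ := he
  obtain ⟨b0, b1, b2, b3⟩ := hψw
  have sQ := fix_of_mem_equiv K s s0 s1 Q hQ.1
  have sw := fix_of_mem_equiv K s s0 s1 w hw
  have ew := fix_of_mem_equiv K e a0 a1 w hw
  have pQ := fix_of_mem_equiv K ψ b0 b1 Q hQ.1
  have fQ := fix_of_mem_equiv K φ h0 h1 Q hQ.1
  have fw := fix_of_mem_equiv K φ h0 h1 w hw
  clear hs'
  have key : φ * ψ * (s * e * s) = (s * e * s) * ψ := by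
    apply aut_ext
    · simp [*]
    · simp [*]
    · simp [*, mul_add]; abel
    · simp [*]
  have hT : s * e * s ∈ G := mul_mem (mul_mem hsG heG) hsG
  have : φ = ((s * e * s) * ψ) * (s * e * s)⁻¹ * ψ⁻¹ := by rw [← key]; group
  rw [this]
  exact mul_mem (mul_mem (mul_mem hT hψ) (inv_mem hT)) (inv_mem hψ)

lemma good_mul (hlin : ∀ φ, IsLinearAut K φ → φ ∈ G)
    (hpsi : ∀ φ, IsZ K (FreeAlgebra.ι K 0 * FreeAlgebra.ι K 1) φ → φ ∈ G)
    (i : Fin 4) (hi : i = 0 ∨ i = 1)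
    {Q : FreeAlgebra K (Fin 4)} (hQ : Good K G Q) : Good K G (FreeAlgebra.ι K i * Q) := by
  obtain ⟨e, he⟩ := exists_isZ K _ (mul_mem (mem_x K) (mem_y K))
  have heG := hpsi e he
  obtain ⟨a0, a1, a2, a3⟩ := he
  rcases hi with rfl | rfl
  · obtain ⟨s, hs, hs'⟩ := exists_perm K (Equiv.swap 1 3)
    have s0 : s (FreeAlgebra.ι K 0) = FreeAlgebra.ι K 0 := hs' 0
    have s1 : s (FreeAlgebra.ι K 1) = FreeAlgebra.ι K 3 := hs' 1
    have s2 : s (FreeAlgebra.ι K 2) = FreeAlgebra.ι K 2 := hs' 2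
    have s3 : s (FreeAlgebra.ι K 3) = FreeAlgebra.ι K 1 := hs' 3
    clear hs'
    refine good_mul_aux K G hlin _ (mem_x K) (s * e * s)
      (mul_mem (mul_mem (hlin s hs) heG) (hlin s hs)) ?_ hQ
    refine ⟨?_, ?_, ?_, ?_⟩ <;> simp [*]
  · obtain ⟨s, hs, hs'⟩ := exists_perm K (Equiv.swap 0 1 * Equiv.swap 1 3)
    obtain ⟨r, hr, hr'⟩ := exists_perm K (Equiv.swap 1 3 * Equiv.swap 0 1)
    have s0 : s (FreeAlgebra.ι K 0) = FreeAlgebra.ι K 1 := hs' 0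
    have s1 : s (FreeAlgebra.ι K 1) = FreeAlgebra.ι K 3 := hs' 1
    have s2 : s (FreeAlgebra.ι K 2) = FreeAlgebra.ι K 2 := hs' 2
    have s3 : s (FreeAlgebra.ι K 3) = FreeAlgebra.ι K 0 := hs' 3
    have r0 : r (FreeAlgebra.ι K 0) = FreeAlgebra.ι K 3 := hr' 0
    have r1 : r (FreeAlgebra.ι K 1) = FreeAlgebra.ι K 0 := hr' 1
    have r2 : r (FreeAlgebra.ι K 2) = FreeAlgebra.ι K 2 := hr' 2
    have r3 : r (FreeAlgebra.ι K 3) = FreeAlgebra.ι K 1 := hr' 3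
    clear hs' hr'
    refine good_mul_aux K G hlin _ (mem_y K) (s * e * r)
      (mul_mem (mul_mem (hlin s hs) heG) (hlin r hr)) ?_ hQ
    refine ⟨?_, ?_, ?_, ?_⟩ <;> simp [*]

lemma good_decomp (hlin : ∀ φ, IsLinearAut K φ → φ ∈ G)
    (hpsi : ∀ φ, IsZ K (FreeAlgebra.ι K 0 * FreeAlgebra.ι K 1) φ → φ ∈ G)
    (P : FreeAlgebra K (Fin 4)) (hP : P ∈ Axy K) :
    ∃ (c : K) (Q : FreeAlgebra K (Fin 4)), Good K G Q ∧ P = algebraMap K _ c + Q := by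
  have hP' : P ∈ Subalgebra.toSubmodule (Axy K) := hP
  rw [Algebra.adjoin_eq_span] at hP'
  induction hP' using Submodule.span_induction with
  | mem m hm =>
    have : m = 1 ∨ Good K G m := by
      clear hP
      induction hm using Submonoid.closure_induction_left with
      | one => exact Or.inl rfl
      | mul_left a ha b hb ih =>
        right
        obtain ⟨i, hi, rfl⟩ : ∃ i : Fin 4, (i = 0 ∨ i = 1) ∧ a = FreeAlgebra.ι K i := by
          rcases ha with rfl | rfl
          · exact ⟨0, by simp, rfl⟩
          · exact ⟨1, by simp, rfl⟩
        rcases ih with rfl | ih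
        · rw [mul_one]; exact good_lin K G hlin i hi
        · exact good_mul K G hlin hpsi i hi ih
    rcases this with rfl | h
    · exact ⟨1, 0, good_zero K G hlin, by simp⟩
    · exact ⟨0, m, h, by simp⟩
  | zero => exact ⟨0, 0, good_zero K G hlin, by simp⟩
  | add a b ha hb iha ihb =>
    rw [← Algebra.adjoin_eq_span] at ha hb
    obtain ⟨c, Q, hQ, rfl⟩ := iha ha
    obtain ⟨d, R, hR, rfl⟩ := ihb hb
    exact ⟨c + d, Q + R, good_add K G hQ hR, by rw [map_add]; abel⟩
  | smul k a ha iha =>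
    rw [← Algebra.adjoin_eq_span] at ha
    obtain ⟨c, Q, hQ, rfl⟩ := iha ha
    exact ⟨k * c, k • Q, good_smul K G hlin k hQ, by
      rw [smul_add, map_mul, ← Algebra.smul_def]⟩

end

/-- If a subgroup `G` of `Aut(K⟨x,y,z,t⟩)` contains all linear automorphisms and the
automorphism `x ↦ x, y ↦ y, z ↦ z + xy, t ↦ t`, then for every `P ∈ K⟨x,y⟩` with zero
constant term, `G` contains the automorphism `x ↦ x, y ↦ y, z ↦ z + P(x,y), t ↦ t`. -/
theorem contains_z_plus_P
    (G : Subgroup (FreeAlgebra K (Fin 4) ≃ₐ[K] FreeAlgebra K (Fin 4)))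
    (hlin : ∀ φ, IsLinearAut K φ → φ ∈ G)
    (hpsi : ∀ φ : FreeAlgebra K (Fin 4) ≃ₐ[K] FreeAlgebra K (Fin 4),
      (φ (FreeAlgebra.ι K 0) = FreeAlgebra.ι K 0 ∧
       φ (FreeAlgebra.ι K 1) = FreeAlgebra.ι K 1 ∧
       φ (FreeAlgebra.ι K 2) = FreeAlgebra.ι K 2 + FreeAlgebra.ι K 0 * FreeAlgebra.ι K 1 ∧
       φ (FreeAlgebra.ι K 3) = FreeAlgebra.ι K 3) → φ ∈ G)
    (P : FreeAlgebra K (Fin 4))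
    (hP : P ∈ Algebra.adjoin K ({FreeAlgebra.ι K 0, FreeAlgebra.ι K 1} :
            Set (FreeAlgebra K (Fin 4))))
    (hP0 : aug K P = 0)
    (φ : FreeAlgebra K (Fin 4) ≃ₐ[K] FreeAlgebra K (Fin 4))
    (hφ : φ (FreeAlgebra.ι K 0) = FreeAlgebra.ι K 0 ∧
          φ (FreeAlgebra.ι K 1) = FreeAlgebra.ι K 1 ∧
          φ (FreeAlgebra.ι K 2) = FreeAlgebra.ι K 2 + P ∧
          φ (FreeAlgebra.ι K 3) = FreeAlgebra.ι K 3) :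
    φ ∈ G := by
  obtain ⟨c, Q, hQ, rfl⟩ := good_decomp K G hlin hpsi P hP
  have hc : c = 0 := by simpa [hQ.2.1] using hP0
  subst hc
  rw [map_zero, zero_add] at hφ
  exact hQ.2.2 φ hφ

end Stmt14
end

section
/- Let K be an infinite field, n ≥ 2, and let I = (i₂,…,iₙ) be a multi-index of nonnegative integers with i₂ + ⋯ + iₙ ≥ 2. For λ₂,…,λₙ ∈ K^× let σ_λ be the automorphism of K[x₁,…,xₙ] given by x₁ ↦ (λ₂^{i₂}⋯λₙ^{iₙ})·x₁ and xⱼ ↦ λⱼxⱼ for j ≥ 2. Then a K-algebra automorphism φ of K[x₁,…,xₙ] commutes with σ_λ for all choices of λ₂,…,λₙ ∈ K^× if and only if there exist ε₁,…,εₙ ∈ K^× and β ∈ K such that φ(x₁) = ε₁x₁ + β·∏_{j≥2} xⱼ^{iⱼ} and φ(xⱼ) = εⱼxⱼ for all j ≥ 2. -/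
open MvPolynomial

namespace Stmt16

lemma pow_exp_eq {K : Type*} [Field K] [Infinite K] (a b : ℕ)
    (h : ∀ t : K, t ≠ 0 → t ^ a = t ^ b) : a = b := by
  have h1 : (Polynomial.X ^ (a+1) : Polynomial K) = Polynomial.X ^ (b+1) := by
    apply Polynomial.funext
    intro t
    by_cases ht : t = 0
    · simp [ht]
    · simp [pow_succ, h t ht]
  have h2 := congrArg Polynomial.natDegree h1
  simpa using h2

noncomputable def scale {K : Type*} [Field K] {n : ℕ} (w : Fin n → K) :
    MvPolynomial (Fin n) K →ₐ[K] MvPolynomial (Fin n) K :=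
  aeval (fun j => C (w j) * X j)

lemma scale_comp {K : Type*} [Field K] {n : ℕ} (w v : Fin n → K) (h : ∀ j, w j * v j = 1) :
    (scale w).comp (scale v) = AlgHom.id K _ := by
  apply MvPolynomial.algHom_ext
  intro j
  simp only [scale, AlgHom.comp_apply, aeval_X, map_mul, AlgHom.id_apply, algHom_C,
    MvPolynomial.algebraMap_eq]
  rw [← mul_assoc, ← C_mul, mul_comm, mul_comm (v j), h, C_1, mul_one]

noncomputable def scaleEquiv {K : Type*} [Field K] {n : ℕ} (w : Fin n → K)
    (hw : ∀ j, w j ≠ 0) :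
    MvPolynomial (Fin n) K ≃ₐ[K] MvPolynomial (Fin n) K :=
  AlgEquiv.ofAlgHom (scale w) (scale (fun j => (w j)⁻¹))
    (scale_comp _ _ (fun j => mul_inv_cancel₀ (hw j)))
    (scale_comp _ _ (fun j => inv_mul_cancel₀ (hw j)))

lemma scale_monomial {K : Type*} [Field K] {n : ℕ} (w : Fin n → K) (m : Fin n →₀ ℕ) (a : K) :
    scale w (monomial m a) = monomial m ((∏ j, w j ^ m j) * a) := by
  rw [scale, aeval_monomial, monomial_eq, Finsupp.prod_fintype _ _ (by simp),
    Finsupp.prod_fintype _ _ (by simp)]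
  simp only [mul_pow, Finset.prod_mul_distrib, MvPolynomial.algebraMap_eq, C_mul, map_prod, map_pow]
  ring

lemma coeff_scale {K : Type*} [Field K] {n : ℕ} (w : Fin n → K) (m : Fin n →₀ ℕ)
    (p : MvPolynomial (Fin n) K) :
    coeff m (scale w p) = (∏ j, w j ^ m j) * coeff m p := by
  classical
  induction p using MvPolynomial.induction_on' with
  | monomial u a =>
    rw [scale_monomial, coeff_monomial, coeff_monomial]
    split_ifs with h
    · rw [h]
    · simp
  | add p q hp hq => rw [map_add, coeff_add, hp, hq, coeff_add, mul_add]

lemma support_weight {K : Type*} [Field K] [Infinite K] {n : ℕ}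
    [NeZero n] (iv : Fin n → ℕ) (hiv0 : iv 0 = 0)
    (φ : MvPolynomial (Fin n) K ≃ₐ[K] MvPolynomial (Fin n) K)
    (H : ∀ l : Fin n → K, (∀ j, j ≠ 0 → l j ≠ 0) →
      ∀ σ : MvPolynomial (Fin n) K ≃ₐ[K] MvPolynomial (Fin n) K,
        (σ (X 0) = C (∏ j, l j ^ iv j) * X 0 ∧
          ∀ j, j ≠ 0 → σ (X j) = C (l j) * X j) →
        σ * φ = φ * σ) (j : Fin n) (m : Fin n →₀ ℕ) (hm : coeff m (φ (X j)) ≠ 0)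
    (k : Fin n) (hk : k ≠ 0) :
    iv k * m 0 + m k = if j = 0 then iv k else if j = k then 1 else 0 := by
  classical
  let W : Fin n → ℕ := fun j => if j = 0 then iv k else if j = k then 1 else 0
  have hW : ∑ i, W i * m i = iv k * m 0 + m k := by
    have : ∀ i, W i * m i = (if i = 0 then iv k * m 0 else 0) + (if i = k then m k else 0) := by
      intro i
      by_cases h0 : i = 0
      · subst h0; simp [W, hk.symm]
      · by_cases h1 : i = k
        · subst h1; simp [W, h0]
        · simp [W, h0, h1]
    simp [this, Finset.sum_add_distrib]
  rw [← hW]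
  change _ = W j
  apply pow_exp_eq (K := K)
  intro t ht
  let l : Fin n → K := fun i => if i = k then t else 1
  have hl : ∏ i, l i ^ iv i = t ^ iv k := by
    simp [l, ite_pow]
  have hw : ∀ i, t ^ W i ≠ 0 := fun i => pow_ne_zero _ ht
  have hX : ∀ i, scaleEquiv (fun i => t ^ W i) hw (X i) = C (t ^ W i) * X i := by
    intro i
    change scale _ _ = _
    simp [scale]
  have := H l (fun i _ => by simp only [l]; split_ifs <;> simp [ht])
    (scaleEquiv (fun i => t ^ W i) hw)
    ⟨by rw [hX, hl]; simp [W], fun i hi => by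
      rw [hX]; congr 2; simp only [W, l, hi, if_false]; split_ifs <;> simp⟩
  have h2 := congrArg (fun f => coeff m (f (X j))) this
  simp only [AlgEquiv.mul_apply, hX] at h2
  rw [map_mul] at h2
  have h3 : φ (C (t ^ W j)) = C (t ^ W j) := φ.commutes _
  rw [h3, coeff_C_mul] at h2
  change coeff m (scale _ _) = _ at h2
  rw [coeff_scale] at h2
  have h4 := mul_right_cancel₀ hm h2
  rw [← h4, ← Finset.prod_pow_eq_pow_sum]
  simp [pow_mul]

lemma prod_eq_mono {K : Type*} [Field K] {n : ℕ} (iv : Fin n → ℕ) :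
    (∏ j, X j ^ iv j : MvPolynomial (Fin n) K) = monomial (Finsupp.equivFunOnFinite.symm iv) 1 := by
  rw [monomial_eq, Finsupp.prod_fintype _ _ (by simp)]
  simp

/-- Let `I = (i₂,…,iₙ)` be a multi-index with `i₂ + ⋯ + iₙ ≥ 2`, and for
`λ₂,…,λₙ ∈ K^×` let `σ_λ : x₁ ↦ (∏ⱼ λⱼ^{iⱼ})·x₁, xⱼ ↦ λⱼxⱼ (j ≥ 2)`.
A `K`-algebra automorphism `φ` of `K[x₁,…,xₙ]` (`K` infinite) commutes with all the
`σ_λ` if and only if `φ(x₁) = ε₁x₁ + β·∏_{j≥2} xⱼ^{iⱼ}` and `φ(xⱼ) = εⱼxⱼ (j ≥ 2)`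
for some `εⱼ ∈ K^×`, `β ∈ K`. -/
theorem commutes_with_weighted_torus_iff {K : Type*} [Field K] [Infinite K] {n : ℕ}
    [NeZero n] (hn : 2 ≤ n) (iv : Fin n → ℕ) (hiv0 : iv 0 = 0)
    (hsum : 2 ≤ ∑ j, iv j)
    (φ : MvPolynomial (Fin n) K ≃ₐ[K] MvPolynomial (Fin n) K) :
    (∀ l : Fin n → K, (∀ j, j ≠ 0 → l j ≠ 0) →
      ∀ σ : MvPolynomial (Fin n) K ≃ₐ[K] MvPolynomial (Fin n) K,
        (σ (X 0) = C (∏ j, l j ^ iv j) * X 0 ∧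
          ∀ j, j ≠ 0 → σ (X j) = C (l j) * X j) →
        σ * φ = φ * σ) ↔
      ∃ ε : Fin n → K, (∀ j, ε j ≠ 0) ∧ ∃ β : K,
        φ (X 0) = C (ε 0) * X 0 + C β * ∏ j, X j ^ iv j ∧
        ∀ j, j ≠ 0 → φ (X j) = C (ε j) * X j := by
  classical
  have hC : ∀ (f : MvPolynomial (Fin n) K ≃ₐ[K] MvPolynomial (Fin n) K) (a : K),
    f (C a) = C a := fun f a => f.commutes a
  constructor
  · intro H
    have key := support_weight iv hiv0 φ H
    let I : Fin n →₀ ℕ := Finsupp.equivFunOnFinite.symm iv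
    have hI : ∀ k, I k = iv k := fun k => rfl
    have hI0 : I ≠ Finsupp.single 0 1 := by
      intro h
      have := DFunLike.congr_fun h 0
      simp [hI, hiv0] at this
    have hj : ∀ j, j ≠ 0 → φ (X j) = C (coeff (Finsupp.single j 1) (φ (X j))) * X j := by
      intro j hj0
      ext m
      rw [coeff_C_mul, coeff_X]
      split_ifs with h
      · rw [h, mul_one]
      · rw [mul_zero]
        by_contra hm
        apply h
        have hk := key j m hm
        simp only [hj0, if_false] at hk
        have hm0 : m 0 = 0 := by
          by_contra hm0
          have hle : ∀ k ∈ Finset.univ, iv k ≤ if j = k then 1 else 0 := by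
            intro k _
            by_cases k0 : k = 0
            · subst k0; simp [hiv0]
            · rw [← hk k k0]
              nlinarith [Nat.pos_of_ne_zero hm0]
          have := Finset.sum_le_sum hle
          simp at this
          omega
        ext k
        by_cases k0 : k = 0
        · subst k0; simp [hm0, hj0]
        · have := hk k k0
          simp only [hm0, mul_zero, zero_add] at this
          rw [this, Finsupp.single_apply]
    have h0 : φ (X 0) = C (coeff (Finsupp.single 0 1) (φ (X 0))) * X 0
        + C (coeff I (φ (X 0))) * ∏ j, X j ^ iv j := by
      rw [prod_eq_mono]
      change _ = _ + _ * monomial I 1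
      ext m
      rw [coeff_add, coeff_C_mul, coeff_C_mul, coeff_X, coeff_monomial]
      by_cases h1 : Finsupp.single 0 1 = m
      · subst h1; simp [hI0]
      · by_cases h2 : I = m
        · subst h2; simp [hI0.symm]
        · simp only [h1, h2, if_false, mul_zero, add_zero]
          by_contra hm
          have hk := key 0 m hm
          simp only [if_true] at hk
          obtain ⟨k, hkp⟩ : ∃ k, iv k ≠ 0 := by
            by_contra! hc
            simp [hc] at hsum
          have k0 : k ≠ 0 := by rintro rfl; exact hkp hiv0
          have hle : m 0 ≤ 1 := by
            by_contra! hc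
            have := hk k k0
            have := Nat.pos_of_ne_zero hkp
            nlinarith
          interval_cases hm0 : m 0
          · apply h2
            ext i
            by_cases i0 : i = 0
            · subst i0; rw [hm0, hI, hiv0]
            · have := hk i i0
              rw [hI]; omega
          · apply h1
            ext i
            by_cases i0 : i = 0
            · subst i0; simp [hm0]
            · have := hk i i0
              rw [Finsupp.single_apply, if_neg (Ne.symm i0)]; omega
    have hε : ∀ j, j ≠ 0 → coeff (Finsupp.single j 1) (φ (X j)) ≠ 0 := by
      intro j hj0 h
      have := hj j hj0
      rw [h, C_0, zero_mul] at this
      exact X_ne_zero j ((map_eq_zero_iff φ φ.injective).1 this)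
    refine ⟨fun j => coeff (Finsupp.single j 1) (φ (X j)), ?_, _, h0, hj⟩
    intro j
    by_cases hj0 : j = 0
    swap
    · exact hε j hj0
    subst hj0
    intro h
    simp only at h
    rw [h, C_0, zero_mul, zero_add] at h0
    set β := coeff I (φ (X 0)) with hβ
    let e : Fin n → K := fun j => coeff (Finsupp.single j 1) (φ (X j))
    have h5 : φ (C (∏ j, e j ^ iv j) * X 0) = φ (C β * ∏ j, X j ^ iv j) := by
      rw [map_mul, map_mul, hC, hC, h0, map_prod, mul_left_comm]
      congr 1
      rw [map_prod, ← Finset.prod_mul_distrib]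
      apply Finset.prod_congr rfl
      intro i _
      by_cases i0 : i = 0
      · subst i0; simp [hiv0]
      · rw [map_pow, map_pow, hj i i0, ← mul_pow]
    have h6 := congrArg (coeff (Finsupp.single 0 1)) (φ.injective h5)
    rw [prod_eq_mono] at h6
    change _ = coeff _ (_ * monomial I 1) at h6
    rw [coeff_C_mul, coeff_C_mul, coeff_X, coeff_monomial, if_pos rfl, if_neg hI0, mul_one,
      mul_zero, Finset.prod_eq_zero_iff] at h6
    obtain ⟨i, _, hi⟩ := h6
    by_cases i0 : i = 0
    · subst i0; simp [hiv0] at hi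
    · exact hε i i0 (by by_contra hc; exact pow_ne_zero _ hc hi)
  · rintro ⟨ε, hε, β, h0, hj⟩ l hl σ ⟨s0, sj⟩
    have hP : σ (∏ j, X j ^ iv j) = C (∏ j, l j ^ iv j) * ∏ j, X j ^ iv j := by
      rw [map_prod, map_prod, ← Finset.prod_mul_distrib]
      apply Finset.prod_congr rfl
      intro i _
      by_cases i0 : i = 0
      · subst i0; simp [hiv0]
      · rw [map_pow, map_pow, sj i i0, ← mul_pow]
    have : ((σ * φ : MvPolynomial (Fin n) K ≃ₐ[K] MvPolynomial (Fin n) K) :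
        MvPolynomial (Fin n) K →ₐ[K] MvPolynomial (Fin n) K) = (φ * σ : MvPolynomial (Fin n) K ≃ₐ[K] MvPolynomial (Fin n) K) := by
      apply MvPolynomial.algHom_ext
      intro i
      change σ (φ (X i)) = φ (σ (X i))
      by_cases i0 : i = 0
      · subst i0
        rw [h0, s0, map_add, map_mul, map_mul, map_mul, hC, hC, hC, hP, h0, s0]
        ring
      · rw [hj i i0, sj i i0, map_mul, map_mul, hC, hC, hj i i0, sj i i0]
        ring
    exact AlgEquiv.ext fun x => DFunLike.congr_fun this x

end Stmt16
end

section
/- Let K be a field and let a, b ∈ K. On the free associative algebra K⟨x,y,z⟩ define the bilinear operation f * g = a·fg + b·gf. Then * is associative (i.e. (f*g)*h = f*(g*h) for all f, g, h ∈ K⟨x,y,z⟩) if and only if ab = 0. -/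
namespace Stmt17

/-- On the free associative algebra `K⟨x,y,z⟩`, the bilinear operation
`f * g = a·fg + b·gf` is associative if and only if `ab = 0`. -/
theorem star_associative_iff {K : Type*} [Field K] (a b : K) :
    (∀ f g h : FreeAlgebra K (Fin 3),
        a • ((a • (f * g) + b • (g * f)) * h) + b • (h * (a • (f * g) + b • (g * f))) =
        a • (f * (a • (g * h) + b • (h * g))) + b • ((a • (g * h) + b • (h * g)) * f)) ↔
      a * b = 0 := by
  constructor
  · intro H
    have h1 := H (FreeAlgebra.ι K 0) (FreeAlgebra.ι K 1) (FreeAlgebra.ι K 2)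
    have h2 := congrArg (FreeAlgebra.lift K
      (![!![0, 1; 0, 0], !![0, 0; 1, 0], !![1, 0; 0, 0]] :
        Fin 3 → Matrix (Fin 2) (Fin 2) K)) h1
    simp only [map_add, map_smul, map_mul, FreeAlgebra.lift_ι_apply] at h2
    have h3 := congrFun (congrFun h2 0) 0
    simp [Matrix.mul_apply, Fin.sum_univ_two] at h3
    first
      | linear_combination h3
      | (rcases h3 with h3 | h3 <;> simp [h3])
  · intro hab
    rcases mul_eq_zero.mp hab with h | h
    · subst h
      intro f g h
      simp [mul_assoc]
    · subst h
      intro f g h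
      simp [mul_assoc]

end Stmt17
end

section
/- Let R be a commutative ring, n ≥ 1, and x₁,…,xₙ ∈ R. Then the alternating sum over nonempty subsets S of {1,…,n} of (−1)^{n−|S|}·(Σ_{i∈S} xᵢ)^n equals n!·x₁⋯xₙ; moreover, for every integer m with 1 ≤ m < n, the alternating sum over nonempty subsets S of {1,…,n} of (−1)^{n−|S|}·(Σ_{i∈S} xᵢ)^m equals 0. -/
namespace Stmt18

lemma sign_sum {R : Type*} [CommRing R] (n m : ℕ) (f : Fin m → Fin n) :
    (∑ S : Finset (Fin n), if (∀ j, f j ∈ S) then (-1 : R) ^ (n - S.card) else 0) =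
      if Function.Surjective f then 1 else 0 := by
  classical
  have h := Finset.prod_add (fun _ : Fin n => (1 : R))
    (fun i => if ∃ j, f j = i then (0 : R) else -1) Finset.univ
  have h1 : (∏ i : Fin n, ((1 : R) + if ∃ j, f j = i then (0 : R) else -1)) =
      if Function.Surjective f then 1 else 0 := by
    split_ifs with hf
    · exact Finset.prod_eq_one fun i _ => by simp [hf i]
    · simp only [Function.Surjective, not_forall] at hf
      obtain ⟨i, hi⟩ := hf
      exact Finset.prod_eq_zero (Finset.mem_univ i) (by rw [if_neg hi]; ring)
  rw [← h1, h, Finset.powerset_univ]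
  refine Finset.sum_congr rfl fun S _ => ?_
  rw [Finset.prod_const_one, one_mul]
  split_ifs with hS
  · rw [Finset.prod_congr rfl (g := fun _ => (-1 : R))]
    · rw [Finset.prod_const, Finset.card_sdiff_of_subset (Finset.subset_univ S)]
      simp
    · intro i hi
      rw [if_neg]
      rintro ⟨j, rfl⟩
      simp [hS j] at hi
  · simp only [not_forall] at hS
    obtain ⟨j, hj⟩ := hS
    exact (Finset.prod_eq_zero (i := f j) (by simp [hj]) (by simp)).symm

lemma key {R : Type*} [CommRing R] (n m : ℕ) (hm : 1 ≤ m) (x : Fin n → R) :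
    (∑ S ∈ Finset.univ.powerset.filter (fun S : Finset (Fin n) => S.Nonempty),
        (-1 : R) ^ (n - S.card) * (∑ i ∈ S, x i) ^ m) =
      ∑ f : Fin m → Fin n,
        if Function.Surjective f then ∏ j, x (f j) else 0 := by
  classical
  rw [Finset.sum_filter_of_ne, Finset.powerset_univ]
  · have e : ∀ S : Finset (Fin n), (-1 : R) ^ (n - S.card) * (∑ i ∈ S, x i) ^ m =
        ∑ f : Fin m → Fin n,
          (if (∀ j, f j ∈ S) then (-1 : R) ^ (n - S.card) else 0) * ∏ j, x (f j) := by
      intro S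
      rw [Finset.sum_pow', Finset.mul_sum]
      simp only [ite_mul, zero_mul]
      rw [← Finset.sum_filter]
      refine Finset.sum_congr ?_ fun _ _ => rfl
      ext f
      simp
    simp only [e]
    rw [Finset.sum_comm]
    refine Finset.sum_congr rfl fun f _ => ?_
    rw [← Finset.sum_mul, sign_sum]
    simp
  · intro S _ h
    by_contra hS
    rw [Finset.not_nonempty_iff_eq_empty] at hS
    subst hS
    apply h
    rw [Finset.sum_empty, zero_pow (by omega), mul_zero]

/-- Inclusion–exclusion identity: the alternating sum over nonempty subsets `S` of
`{1,…,n}` of `(−1)^{n−|S|}(Σ_{i∈S} xᵢ)^n` equals `n!·x₁⋯xₙ`, and the analogous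
alternating sum with exponent `m`, `1 ≤ m < n`, vanishes. -/
theorem alternating_power_sums {R : Type*} [CommRing R] (n : ℕ) (hn : 1 ≤ n)
    (x : Fin n → R) :
    (∑ S ∈ Finset.univ.powerset.filter (fun S : Finset (Fin n) => S.Nonempty),
        (-1 : R) ^ (n - S.card) * (∑ i ∈ S, x i) ^ n) =
      (n.factorial : R) * ∏ i, x i ∧
    ∀ m : ℕ, 1 ≤ m → m < n →
      (∑ S ∈ Finset.univ.powerset.filter (fun S : Finset (Fin n) => S.Nonempty),
          (-1 : R) ^ (n - S.card) * (∑ i ∈ S, x i) ^ m) = 0 := by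
  classical
  constructor
  · rw [key n n hn x, ← Finset.sum_filter]
    have h : ∑ σ : Equiv.Perm (Fin n), ∏ j, x (σ j) =
        ∑ f ∈ Finset.univ.filter (fun f : Fin n → Fin n => Function.Surjective f),
          ∏ j, x (f j) := by
      refine Finset.sum_bij (fun σ _ => (σ : Fin n → Fin n)) ?_ ?_ ?_ ?_
      · intro σ _
        simp [σ.surjective]
      · intro σ _ τ _ h
        exact DFunLike.coe_injective h
      · intro f hf
        have hf' : Function.Surjective f := by simpa using hf
        exact ⟨Equiv.ofBijective f (Finite.surjective_iff_bijective.mp hf'),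
          Finset.mem_univ _, rfl⟩
      · intro σ _
        rfl
    rw [← h]
    simp only [Equiv.prod_comp]
    simp [Fintype.card_perm]
  · intro m hm hmn
    rw [key n m hm x]
    refine Finset.sum_eq_zero fun f _ => if_neg fun hf => ?_
    have := Fintype.card_le_of_surjective f hf
    simp at this
    omega

end Stmt18
end
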